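/- Fix integers m ≥ 1 and n ≥ 0. Call a sequence of positions w₀, w₁, …, w_{2n} ∈ ℤ^m a non-intersecting loop walk if w₀ = w_{2n} = (1, 2, …, m), for each 0 ≤ t < 2n the difference w_{t+1} − w_t equals +e_i or −e_i for some standard basis vector e_i of ℤ^m, and for every t the m coordinates of w_t are pairwise distinct. Then the number of non-intersecting loop walks equals binomial(2n, n) · Σ_λ (f^λ)², the sum running over all partitions λ of n with at most m nonzero parts. -/

import Mathlib

/-!
The proof works with two operators on functions of configurations `Fin m → ℤ`: `U = moveOp 1` and
`D = moveOp (-1)` sum a function over the configurations reached by one admissible right,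
respectively left, move. The number of closed walks of length `2n` is
`((U + D) ^ (2n)) δ` evaluated at the initial configuration, where `δ` is its indicator function
(`encard_walkSet`).

The essential fact is that `U` and `D` commute (`moveOp_commute`). If different walkers move, the
two moves may be exchanged without creating a collision (`injective_swap`). If the same walker
moves and returns, one compares the number of walkers free to move right with the number free to
move left, and these agree (`card_movable`). The binomial theorem for commuting elements then
expands `(U + D) ^ (2n)`, and since each move changes the sum of the coordinates by `±1`, only
`choose (2n) n • U ^ n D ^ n` contributes (`closed_pow_apply`).

As `U` and `D` are adjoint (`finsum_moveOp`), the value of `U ^ n D ^ n δ` at the initial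
configuration is `∑ₓ c(x)²`, where `c(x) = (D ^ n δ) x` counts the ways to reach `x` by `n` right
moves. The displacements of the walkers, read from right to left, form a partition, and `c` obeys
the branching rule of standard tableaux (removal of the cell with the largest entry), so `c(x)` is
the number of standard tableaux of that shape (`encard_tab_configCells`). Partitions of `n` with at
most `m` parts correspond to the configurations in the support of `c` (`partConfig_injective`,
`exists_partConfig`).
-/

open scoped BigOperators Classical

/-- The `i`-th largest element (0-indexed) of a multiset of naturals, `0` if absent. -/
def nthPart (μ : Multiset ℕ) (i : ℕ) : ℕ :=
  ((μ.sort (· ≤ ·)).reverse).getD i 0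

/-- Cells of the Young diagram whose parts are the multiset `μ`. -/
def shapeCells (μ : Multiset ℕ) : Finset (ℕ × ℕ) :=
  (Finset.range μ.card ×ˢ Finset.range (μ.sum + 1)).filter fun c => c.2 < nthPart μ c.1

/-- Number of standard Young tableaux of shape `μ` (filled bijectively with `1,…,|μ|`,
strictly increasing along rows and down columns). -/
noncomputable def sytCount (μ : Multiset ℕ) : ℕ :=
  Set.ncard {T : ℕ × ℕ → ℕ |
    (∀ c, c ∉ shapeCells μ → T c = 0) ∧
    Set.BijOn T (shapeCells μ : Set (ℕ × ℕ)) (Set.Icc 1 μ.sum) ∧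
    (∀ i j, (i, j + 1) ∈ shapeCells μ → T (i, j) < T (i, j + 1)) ∧
    (∀ i j, (i + 1, j) ∈ shapeCells μ → T (i, j) < T (i + 1, j))}

/-! ### The move operators -/

/-- The one-step transfer operator on functions of configurations: sum over the configurations
reached by moving one walker by `ε`, all walkers staying on distinct sites before and after. -/
noncomputable def moveOp {m : ℕ} (ε : ℤ) : Module.End ℕ ((Fin m → ℤ) → ℕ) where
  toFun g := fun x => ∑ i : Fin m,
    if Function.Injective x ∧ Function.Injective (x + Pi.single i ε) then
      g (x + Pi.single i ε) else 0
  map_add' g h := by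
    funext x
    simp only [Pi.add_apply, ← Finset.sum_add_distrib]
    refine Finset.sum_congr rfl fun i _ => ?_
    split_ifs <;> simp
  map_smul' c g := by
    funext x
    simp only [Pi.smul_apply, Finset.smul_sum, RingHom.id_apply]
    refine Finset.sum_congr rfl fun i _ => ?_
    split_ifs <;> simp

theorem moveOp_apply {m : ℕ} (ε : ℤ) (g : (Fin m → ℤ) → ℕ) (x : Fin m → ℤ) :
    moveOp ε g x = ∑ i : Fin m,
      if Function.Injective x ∧ Function.Injective (x + Pi.single i ε) then
        g (x + Pi.single i ε) else 0 := rfl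

theorem injective_add_single_iff {m : ℕ} {x : Fin m → ℤ} (hx : Function.Injective x)
    (i : Fin m) {ε : ℤ} (hε : ε ≠ 0) :
    Function.Injective (x + Pi.single i ε) ↔ ∀ k, x k ≠ x i + ε := by
  constructor
  · intro h k hk
    by_cases hki : k = i
    · subst hki; omega
    · exact hki (h (by simp [hki, hk]))
  · intro h a b hab
    simp only [Pi.add_apply, Pi.single_apply] at hab
    split_ifs at hab with h1 h2 h2
    · rw [h1, h2]
    · subst h1; exact absurd (by omega) (h b)
    · subst h2; exact absurd (by omega) (h a)
    · exact hx (by omega)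

/-- As many walkers can move right as can move left: both numbers equal `m` minus the number of
pairs of walkers on adjacent sites. -/
theorem card_movable {m : ℕ} {x : Fin m → ℤ} (hx : Function.Injective x) :
    (Finset.univ.filter fun i => Function.Injective (x + Pi.single i 1)).card =
      (Finset.univ.filter fun i => Function.Injective (x + Pi.single i (-1))).card := by
  have key : (Finset.univ.filter fun i => ¬ Function.Injective (x + Pi.single i 1)).card =
      (Finset.univ.filter fun i => ¬ Function.Injective (x + Pi.single i (-1))).card := by
    simp only [injective_add_single_iff hx _ one_ne_zero,
      injective_add_single_iff hx _ (show (-1 : ℤ) ≠ 0 by decide), not_forall, not_not]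
    have h1 : ∀ ε : ℤ, (Finset.univ.filter fun i => ∃ k, x k = x i + ε).card =
        ∑ i, ∑ k, if x k = x i + ε then 1 else 0 := by
      intro ε
      rw [Finset.card_filter]
      refine Finset.sum_congr rfl fun i _ => ?_
      split_ifs with h
      · obtain ⟨k, hk⟩ := h
        have : ∀ l, (x l = x i + ε) ↔ l = k := fun l =>
          ⟨fun h => hx (by omega), fun h => by rw [h, hk]⟩
        simp [this]
      · push Not at h
        simp [h]
    rw [h1, h1, Finset.sum_comm]
    refine Finset.sum_congr rfl fun i _ => Finset.sum_congr rfl fun k _ => ?_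
    congr 1
    exact propext ⟨fun h => by omega, fun h => by omega⟩
  have a := Finset.card_filter_add_card_filter_not (s := (Finset.univ : Finset (Fin m)))
    (fun i => Function.Injective (x + Pi.single i 1))
  have b := Finset.card_filter_add_card_filter_not (s := (Finset.univ : Finset (Fin m)))
    (fun i => Function.Injective (x + Pi.single i (-1)))
  omega

/-- If a walker `i` moves right and another walker `j` moves left, then the order in which they
move does not affect whether all configurations involved are collision free. -/
theorem injective_swap {m : ℕ} {x : Fin m → ℤ} (hx : Function.Injective x) {i j : Fin m}
    (hij : i ≠ j) {ε : ℤ} (hε : ε ≠ 0)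
    (h : Function.Injective (x + Pi.single i ε))
    (h2 : Function.Injective (x + Pi.single i ε + Pi.single j (-ε))) :
    Function.Injective (x + Pi.single j (-ε)) := by
  rw [injective_add_single_iff hx j (neg_ne_zero.2 hε)]
  intro k hk
  by_cases hki : k = i
  · subst hki
    rw [injective_add_single_iff hx k hε] at h
    exact h j (by omega)
  · rw [injective_add_single_iff h j (neg_ne_zero.2 hε)] at h2
    apply h2 k
    simp [hki, hij.symm, hk]

/-- Right moves and left moves commute: off the diagonal the two orders are matched by
`injective_swap`, and returns to the same configuration are matched by `card_movable`. -/
theorem moveOp_commute {m : ℕ} : Commute (moveOp (m := m) 1) (moveOp (-1)) := by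
  refine LinearMap.ext fun g => funext fun x => ?_
  simp only [Module.End.mul_apply]
  by_cases hx : Function.Injective x
  swap
  · rw [moveOp_apply, moveOp_apply]; simp [hx]
  have expand : ∀ ε : ℤ, moveOp ε (moveOp (-ε) g) x =
      (Finset.univ.filter fun i => Function.Injective (x + Pi.single i ε)).card * g x +
      ∑ i, ∑ j, if i ≠ j ∧ Function.Injective (x + Pi.single i ε) ∧
        Function.Injective (x + Pi.single i ε + Pi.single j (-ε)) then
          g (x + Pi.single i ε + Pi.single j (-ε)) else 0 := by
    intro ε
    rw [Finset.card_filter, Finset.sum_mul, ← Finset.sum_add_distrib, moveOp_apply]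
    refine Finset.sum_congr rfl fun i _ => ?_
    by_cases hi : Function.Injective (x + Pi.single i ε)
    swap
    · simp [hi]
    simp only [hx, hi, moveOp_apply, true_and, if_true]
    rw [← Finset.add_sum_erase _ _ (Finset.mem_univ i),
      ← Finset.add_sum_erase _ (fun j => if i ≠ j ∧ _ then _ else _) (Finset.mem_univ i)]
    have e : x + Pi.single i ε + Pi.single i (-ε) = x := by
      rw [add_assoc, ← Pi.single_add]; simp
    simp only [e, hx, ne_eq, not_true_eq_false, false_and, if_true, if_false, zero_add,
      one_mul]
    congr 1
    refine Finset.sum_congr rfl fun j hj => ?_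
    simp [(Finset.ne_of_mem_erase hj).symm]
  have h1 := expand 1
  have h2 := expand (-1)
  rw [neg_neg] at h2
  rw [h1, h2, card_movable hx]
  congr 1
  rw [Finset.sum_comm]
  refine Finset.sum_congr rfl fun i _ => Finset.sum_congr rfl fun j _ => ?_
  have e : x + Pi.single j (1 : ℤ) + Pi.single i (-1 : ℤ) =
    x + Pi.single i (-1 : ℤ) + Pi.single j (1 : ℤ) := by abel
  rw [← e]
  congr 1
  refine propext ⟨fun ⟨a, b, c⟩ => ⟨a.symm, injective_swap hx a one_ne_zero b c, c⟩,
    fun ⟨a, b, c⟩ => ⟨a.symm, ?_, c⟩⟩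
  have := injective_swap (ε := -1) hx a (by decide) b (by rw [neg_neg, ← e]; exact c)
  rwa [neg_neg] at this

/-- Moves right and moves left are adjoint for the pairing `∑ₓ f x * h x`. -/
theorem finsum_moveOp {m : ℕ} (f h : (Fin m → ℤ) → ℕ) (hf : f.support.Finite) (ε : ℤ) :
    ∑ᶠ x, f x * moveOp ε h x = ∑ᶠ x, moveOp (-ε) f x * h x := by
  simp only [moveOp_apply, Finset.mul_sum, Finset.sum_mul]
  rw [finsum_sum_comm, finsum_sum_comm]
  · refine Finset.sum_congr rfl fun i _ => ?_
    refine Eq.trans (finsum_congr fun x => ?_)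
      (finsum_comp_equiv (Equiv.addRight (Pi.single i ε : Fin m → ℤ)))
    have e : x + Pi.single i ε + Pi.single i (-ε) = x := by
      rw [add_assoc, ← Pi.single_add]; simp
    simp only [Equiv.coe_addRight, e]
    by_cases h1 : Function.Injective x <;>
      by_cases h2 : Function.Injective (x + Pi.single i ε) <;> simp [h1, h2]
  · intro i _
    refine (hf.image (fun x => x + Pi.single i ε)).subset fun y hy => ?_
    refine ⟨y + Pi.single i (-ε), ?_, ?_⟩
    · intro h0
      simp [h0] at hy
    · simp only
      rw [add_assoc, ← Pi.single_add]; simp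
  · intro i _
    refine hf.subset fun y hy h0 => ?_
    simp [h0] at hy

theorem support_moveOp {m : ℕ} (f : (Fin m → ℤ) → ℕ) (ε : ℤ) {x : Fin m → ℤ}
    (h : moveOp ε f x ≠ 0) : ∃ i, Function.Injective x ∧ Function.Injective (x + Pi.single i ε) ∧
      f (x + Pi.single i ε) ≠ 0 := by
  rw [moveOp_apply] at h
  obtain ⟨i, _, hi⟩ := Finset.exists_ne_zero_of_sum_ne_zero h
  split_ifs at hi with hc
  · exact ⟨i, hc.1, hc.2, hi⟩
  · exact absurd rfl hi

theorem finite_support_moveOp {m : ℕ} (f : (Fin m → ℤ) → ℕ) (hf : f.support.Finite) (ε : ℤ) :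
    (moveOp ε f).support.Finite := by
  refine (Set.finite_iUnion fun i : Fin m =>
    hf.image (fun x => x + Pi.single i (-ε))).subset fun x hx => ?_
  obtain ⟨i, _, _, hi⟩ := support_moveOp f ε hx
  refine Set.mem_iUnion.2 ⟨i, _, hi, ?_⟩
  simp only
  rw [add_assoc, ← Pi.single_add]; simp

/-! ### Counting by words in the operators -/

/-- The indicator function of the initial configuration `(1, …, m)`. -/
noncomputable def startInd {m : ℕ} : (Fin m → ℤ) → ℕ :=
  fun x => if x = (fun i : Fin m => ((i : ℕ) : ℤ) + 1) then 1 else 0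

/-- The number of ways to reach the configuration `x` from `(1, …, m)` in `n` right moves. -/
noncomputable def upCount {m : ℕ} (n : ℕ) : (Fin m → ℤ) → ℕ :=
  ((moveOp (-1)) ^ n) startInd

theorem upCount_succ {m : ℕ} (n : ℕ) :
    upCount (m := m) (n + 1) = moveOp (-1) (upCount n) := by
  rw [upCount, pow_succ', Module.End.mul_apply, upCount]

theorem finite_support_upCount {m : ℕ} (n : ℕ) : (upCount (m := m) n).support.Finite := by
  induction n with
  | zero =>
    refine (Set.finite_singleton (fun i : Fin m => ((i : ℕ) : ℤ) + 1)).subset fun x hx => ?_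
    by_contra hne
    exact hx (if_neg (by simpa using hne))
  | succ n ih => rw [upCount_succ]; exact finite_support_moveOp _ ih _

theorem up_pow_apply {m : ℕ} (n : ℕ) (h : (Fin m → ℤ) → ℕ) :
    ((moveOp 1) ^ n) h (fun i => ((i : ℕ) : ℤ) + 1) = ∑ᶠ x, upCount n x * h x := by
  induction n generalizing h with
  | zero =>
    rw [finsum_eq_single _ (fun i : Fin m => ((i : ℕ) : ℤ) + 1)]
    · simp [upCount, startInd]
    · intro x hx
      simp [upCount, startInd, hx]
  | succ n ih =>
    rw [pow_succ, Module.End.mul_apply, ih, finsum_moveOp _ _ (finite_support_upCount n),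
      upCount_succ]

/-- Each move by `ε` shifts the sum of the coordinates by `ε`. -/
theorem sum_of_pow_ne_zero {m : ℕ} (ε s : ℤ) (f : (Fin m → ℤ) → ℕ)
    (hf : ∀ x, f x ≠ 0 → ∑ i, x i = s) (k : ℕ) :
    ∀ x, ((moveOp ε) ^ k) f x ≠ 0 → ∑ i, x i = s - k * ε := by
  induction k with
  | zero => simpa using hf
  | succ k ih =>
    intro x hx
    rw [pow_succ', Module.End.mul_apply] at hx
    obtain ⟨i, _, _, hi⟩ := support_moveOp _ _ hx
    have := ih _ hi
    simp only [Pi.add_apply, Finset.sum_add_distrib, Finset.sum_pi_single', Finset.mem_univ,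
      if_true] at this
    push_cast
    linarith

/-- The operator count of closed walks: by commutation only the words with `n` right moves and
`n` left moves contribute, each with the value of the sorted word. -/
theorem closed_pow_apply {m : ℕ} (n : ℕ) :
    ((moveOp 1 + moveOp (-1) : Module.End ℕ ((Fin m → ℤ) → ℕ)) ^ (2 * n)) startInd (fun i : Fin m => ((i : ℕ) : ℤ) + 1) =
      (2 * n).choose n * ∑ᶠ x : Fin m → ℤ, upCount n x ^ 2 := by
  rw [moveOp_commute.add_pow', LinearMap.sum_apply, Finset.sum_apply,
    Finset.sum_eq_single (n, n)]
  · simp only [LinearMap.smul_apply, Pi.smul_apply, Module.End.mul_apply, smul_eq_mul]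
    rw [up_pow_apply]
    simp only [sq]
    rfl
  · rintro ⟨a, b⟩ hab hne
    rw [Finset.HasAntidiagonal.mem_antidiagonal] at hab
    simp only [LinearMap.smul_apply, Pi.smul_apply, Module.End.mul_apply, smul_eq_mul] at hab ⊢
    by_contra h0
    have h1 := right_ne_zero_of_mul h0
    have h2 := sum_of_pow_ne_zero 1 _ _
      (sum_of_pow_ne_zero (-1) (∑ i : Fin m, (((i : ℕ) : ℤ) + 1)) startInd (fun x hx => by
        have : x = fun i : Fin m => ((i : ℕ) : ℤ) + 1 := by
          by_contra hne; exact hx (if_neg hne)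
        rw [this]) b) a _ h1
    apply hne
    have : (a : ℤ) = b := by linarith
    ext <;> simp <;> omega
  · intro h
    exact absurd (Finset.HasAntidiagonal.mem_antidiagonal.2 (two_mul n).symm) h

/-! ### Closed walks -/

/-- Collision-free walks with `N` steps from `x` to the initial configuration `(1, …, m)`. -/
def walkSet {m : ℕ} (N : ℕ) (x : Fin m → ℤ) : Set (Fin (N + 1) → Fin m → ℤ) :=
  {w | (∀ i, w 0 i = x i) ∧
    (∀ i, w (Fin.last N) i = ((i : ℕ) : ℤ) + 1) ∧
    (∀ t : Fin N, ∃ j : Fin m,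
      (w t.succ j = w t.castSucc j + 1 ∨ w t.succ j = w t.castSucc j - 1) ∧
      ∀ j', j' ≠ j → w t.succ j' = w t.castSucc j') ∧
    (∀ t, Function.Injective (w t))}

/-- The displacement `±1` named by a Boolean: `true` is a right move, `false` a left move. -/
def dir (b : Bool) : ℤ := if b then 1 else -1

theorem step_iff {m : ℕ} (x y : Fin m → ℤ) :
    (∃ j : Fin m, (y j = x j + 1 ∨ y j = x j - 1) ∧ ∀ j', j' ≠ j → y j' = x j') ↔
      ∃ p : Fin m × Bool, y = x + Pi.single p.1 (dir p.2) := by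
  constructor
  · rintro ⟨j, h | h, h'⟩
    · refine ⟨(j, true), funext fun k => ?_⟩
      by_cases hk : k = j
      · subst hk; simp [h, dir]
      · simp [h' k hk, hk]
    · refine ⟨(j, false), funext fun k => ?_⟩
      by_cases hk : k = j
      · subst hk; simp [h, dir, sub_eq_add_neg]
      · simp [h' k hk, hk]
  · rintro ⟨⟨j, b⟩, rfl⟩
    refine ⟨j, ?_, fun k hk => by simp [hk]⟩
    cases b
    · right; simp [dir, sub_eq_add_neg]
    · left; simp [dir]

theorem single_dir_injective {m : ℕ} {p q : Fin m × Bool}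
    (h : (Pi.single p.1 (dir p.2) : Fin m → ℤ) = Pi.single q.1 (dir q.2)) : p = q := by
  obtain ⟨i, b⟩ := p
  obtain ⟨j, c⟩ := q
  have h1 := congrFun h i
  simp only [Pi.single_apply, if_true] at h1
  split_ifs at h1 with hij
  · subst hij
    cases b <;> cases c <;> simp_all [dir]
  · cases b <;> simp [dir] at h1

theorem walkSet_succ {m : ℕ} (N : ℕ) (x : Fin m → ℤ) (hx : Function.Injective x) :
    walkSet (N + 1) x = ⋃ p : Fin m × Bool,
      (fun w => (Fin.cons x w : Fin (N + 1 + 1) → Fin m → ℤ)) ''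
        walkSet N (x + Pi.single p.1 (dir p.2)) := by
  ext w
  simp only [Set.mem_iUnion, Set.mem_image]
  constructor
  · rintro ⟨h0, h1, h2, h3⟩
    have hw0 : w 0 = x := funext h0
    obtain ⟨p, hp⟩ := (step_iff _ _).1 (h2 0)
    rw [Fin.castSucc_zero, hw0] at hp
    refine ⟨p, Fin.tail w, ⟨fun i => ?_, fun i => ?_, fun t => ?_, fun t => h3 _⟩, ?_⟩
    · rw [← hp]; rfl
    · rw [← h1 i]; rfl
    · exact h2 t.succ
    · rw [← hw0]; exact Fin.cons_self_tail w
  · rintro ⟨p, v, ⟨h0, h1, h2, h3⟩, rfl⟩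
    refine ⟨fun i => rfl, fun i => ?_, fun t => ?_, fun t => ?_⟩
    · rw [← h1 i]; rfl
    · refine Fin.cases ?_ (fun t => ?_) t
      · rw [step_iff]
        exact ⟨p, funext h0⟩
      · exact h2 t
    · refine Fin.cases ?_ (fun t => ?_) t
      · exact hx
      · exact h3 t

theorem encard_walkSet {m : ℕ} (N : ℕ) (x : Fin m → ℤ) :
    (walkSet N x).encard =
      (((moveOp 1 + moveOp (-1) : Module.End ℕ ((Fin m → ℤ) → ℕ)) ^ N) startInd x : ℕ) := by
  induction N generalizing x with
  | zero =>
    simp only [pow_zero, Module.End.one_apply, startInd]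
    split_ifs with h
    · rw [Nat.cast_one, Set.encard_eq_one]
      refine ⟨fun _ => x, Set.eq_singleton_iff_unique_mem.2 ⟨⟨fun _ => rfl, fun i => by rw [h],
        fun t => t.elim0, fun t => ?_⟩, fun w hw => ?_⟩⟩
      · intro a b hab
        rw [h] at hab
        exact Fin.ext (by simpa using hab)
      · funext t i
        rw [Fin.fin_one_eq_zero t]
        exact hw.1 i
    · rw [Nat.cast_zero, Set.encard_eq_zero, Set.eq_empty_iff_forall_notMem]
      rintro w ⟨h0, h1, -⟩
      exact h (funext fun i => by rw [← h0 i, ← h1 i]; rfl)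
  | succ N ih =>
    rw [pow_succ', Module.End.mul_apply, LinearMap.add_apply, Pi.add_apply]
    have hcons : Function.Injective
        (fun w => (Fin.cons x w : Fin (N + 1 + 1) → Fin m → ℤ)) :=
      Fin.cons_right_injective (α := fun _ => Fin m → ℤ) x
    by_cases hx : Function.Injective x
    · rw [walkSet_succ N x hx, Set.encard_iUnion_of_finite, finsum_eq_sum_of_fintype,
        Fintype.sum_prod_type, moveOp_apply, moveOp_apply, ← Finset.sum_add_distrib, Nat.cast_sum]
      · refine Finset.sum_congr rfl fun i _ => ?_
        rw [Fintype.sum_bool, Nat.cast_add]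
        have key : ∀ ε : ℤ, ((fun w => (Fin.cons x w : Fin (N + 1 + 1) → Fin m → ℤ)) ''
            walkSet N (x + Pi.single i ε)).encard =
            ((if Function.Injective x ∧ Function.Injective (x + Pi.single i ε) then
              ((moveOp 1 + moveOp (-1) : Module.End ℕ ((Fin m → ℤ) → ℕ)) ^ N) startInd
                (x + Pi.single i ε) else 0 : ℕ) : ℕ∞) := by
          intro ε
          rw [hcons.encard_image]
          split_ifs with hc
          · exact ih _
          · rw [Nat.cast_zero, Set.encard_eq_zero, Set.eq_empty_iff_forall_notMem]
            rintro w ⟨h0, -, -, h3⟩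
            exact hc ⟨hx, (funext h0 : w 0 = _) ▸ h3 0⟩
        exact congrArg₂ _ (key 1) (key (-1))
      · intro p q hpq
        rw [Function.onFun, Set.disjoint_left]
        rintro _ ⟨v, hv, rfl⟩ ⟨v', hv', h⟩
        have hvv : v' = v := hcons h
        subst hvv
        exact hpq (single_dir_injective
          (add_left_cancel ((funext hv.1 : v' 0 = _).symm.trans (funext hv'.1))))
    · have : walkSet (N + 1) x = ∅ := by
        rw [Set.eq_empty_iff_forall_notMem]
        rintro w ⟨h0, -, -, h3⟩
        exact hx ((funext h0 : w 0 = x) ▸ h3 0)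
      rw [this, moveOp_apply, moveOp_apply]
      simp [hx]

/-! ### Standard tableaux -/

/-- Fillings of the cells of `S` by `1, …, N`, each used once, increasing along rows and down
columns, and extended by `0` off `S`. -/
def tab (S : Set (ℕ × ℕ)) (N : ℕ) : Set (ℕ × ℕ → ℕ) :=
  {T | (∀ c, c ∉ S → T c = 0) ∧
    Set.BijOn T S (Set.Icc 1 N) ∧
    (∀ i j, (i, j + 1) ∈ S → T (i, j) < T (i, j + 1)) ∧
    (∀ i j, (i + 1, j) ∈ S → T (i, j) < T (i + 1, j))}

theorem tab_le {S : Set (ℕ × ℕ)} {N : ℕ} {T : ℕ × ℕ → ℕ} (hT : T ∈ tab S N) (c : ℕ × ℕ) :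
    T c ≤ N := by
  by_cases hc : c ∈ S
  · exact (hT.2.1.mapsTo hc).2
  · rw [hT.1 c hc]; exact Nat.zero_le _

/-- Deleting the largest entry decomposes the tableaux according to the corner that holds it. -/
theorem tab_succ {S : Set (ℕ × ℕ)} {N : ℕ} {P : Finset (ℕ × ℕ)}
    (hP : ∀ p, p ∈ P ↔ p ∈ S ∧ (p.1, p.2 + 1) ∉ S ∧ (p.1 + 1, p.2) ∉ S) :
    tab S (N + 1) = ⋃ p : P, (fun T => Function.update T p.1 (N + 1)) '' tab (S \ {p.1}) N := by
  ext T
  simp only [Set.mem_iUnion, Set.mem_image]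
  constructor
  · intro hT
    obtain ⟨h0, h1, h2, h3⟩ := hT
    obtain ⟨p, hpS, hp⟩ := h1.surjOn (show N + 1 ∈ Set.Icc 1 (N + 1) by simp)
    have hle : ∀ c, T c ≤ N + 1 := tab_le ⟨h0, h1, h2, h3⟩
    have hpP : p ∈ P := by
      rw [hP]
      refine ⟨hpS, fun h => ?_, fun h => ?_⟩
      · have a := h2 _ _ h
        have b := hle (p.1, p.2 + 1)
        rw [Prod.mk.eta, hp] at a
        omega
      · have a := h3 _ _ h
        have b := hle (p.1 + 1, p.2)
        rw [Prod.mk.eta, hp] at a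
        omega
    have hpos : ∀ c ∈ S, 0 < T c := fun c hc => (h1.mapsTo hc).1
    refine ⟨⟨p, hpP⟩, Function.update T p 0, ⟨fun c hc => ?_, ⟨fun c hc => ?_, ?_, ?_⟩,
      fun i j hij => ?_, fun i j hij => ?_⟩, ?_⟩
    · by_cases hcp : c = p
      · simp [hcp]
      · rw [Function.update_of_ne hcp]
        exact h0 c fun h => hc ⟨h, hcp⟩
    · have hcp : c ≠ p := hc.2
      rw [Function.update_of_ne hcp]
      have : T c ≠ N + 1 := fun h => hcp (h1.injOn hc.1 hpS (h.trans hp.symm))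
      have a := h1.mapsTo hc.1
      exact ⟨a.1, by have := a.2; omega⟩
    · intro c hc d hd hcd
      simp only [Function.update_of_ne (show c ≠ p from hc.2),
        Function.update_of_ne (show d ≠ p from hd.2)] at hcd
      exact h1.injOn hc.1 hd.1 hcd
    · intro k hk
      obtain ⟨c, hc, hck⟩ := h1.surjOn (show k ∈ Set.Icc 1 (N + 1) from ⟨hk.1, by
        have := hk.2; omega⟩)
      have hcp : c ≠ p := by
        rintro rfl
        have := hk.2
        omega
      exact ⟨c, ⟨hc, hcp⟩, by rw [Function.update_of_ne hcp, hck]⟩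
    · rw [Function.update_of_ne (show (i, j + 1) ≠ p from hij.2)]
      by_cases h : (i, j) = p
      · rw [h, Function.update_self]; exact hpos _ hij.1
      · rw [Function.update_of_ne h]; exact h2 _ _ hij.1
    · rw [Function.update_of_ne (show (i + 1, j) ≠ p from hij.2)]
      by_cases h : (i, j) = p
      · rw [h, Function.update_self]; exact hpos _ hij.1
      · rw [Function.update_of_ne h]; exact h3 _ _ hij.1
    · simp [← hp]
  · rintro ⟨⟨p, hpP⟩, T, hT, rfl⟩
    have hle := tab_le hT
    obtain ⟨h0, h1, h2, h3⟩ := hT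
    obtain ⟨hpS, hr, hd⟩ := (hP p).1 hpP
    simp only
    refine ⟨fun c hc => ?_, ⟨fun c hc => ?_, ?_, ?_⟩, fun i j hij => ?_, fun i j hij => ?_⟩
    · have hcp : c ≠ p := by rintro rfl; exact hc hpS
      rw [Function.update_of_ne hcp]
      exact h0 c fun h => hc h.1
    · by_cases hcp : c = p
      · simp [hcp]
      · rw [Function.update_of_ne hcp]
        have a := h1.mapsTo (show c ∈ S \ {p} from ⟨hc, hcp⟩)
        exact ⟨a.1, by have := a.2; omega⟩
    · intro c hc d hd hcd
      by_cases hcp : c = p <;> by_cases hdp : d = p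
      · rw [hcp, hdp]
      · subst hcp
        rw [Function.update_self, Function.update_of_ne hdp] at hcd
        have := hle d
        omega
      · subst hdp
        rw [Function.update_self, Function.update_of_ne hcp] at hcd
        have := hle c
        omega
      · rw [Function.update_of_ne hcp, Function.update_of_ne hdp] at hcd
        exact h1.injOn ⟨hc, hcp⟩ ⟨hd, hdp⟩ hcd
    · intro k hk
      by_cases hkN : k = N + 1
      · exact ⟨p, hpS, by simp [hkN]⟩
      · obtain ⟨c, hc, hck⟩ := h1.surjOn (show k ∈ Set.Icc 1 N from ⟨hk.1, by
          have := hk.2; omega⟩)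
        exact ⟨c, hc.1, by rw [Function.update_of_ne (show c ≠ p from hc.2), hck]⟩
    · have hne : (i, j) ≠ p := by rintro rfl; exact hr hij
      rw [Function.update_of_ne hne]
      by_cases h : (i, j + 1) = p
      · rw [h, Function.update_self]; have := hle (i, j); omega
      · rw [Function.update_of_ne h]; exact h2 _ _ ⟨hij, h⟩
    · have hne : (i, j) ≠ p := by rintro rfl; exact hd hij
      rw [Function.update_of_ne hne]
      by_cases h : (i + 1, j) = p
      · rw [h, Function.update_self]; have := hle (i, j); omega
      · rw [Function.update_of_ne h]; exact h3 _ _ ⟨hij, h⟩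

/-- The branching rule: removing the cell that holds the largest entry. -/
theorem encard_tab_succ {S : Set (ℕ × ℕ)} {N : ℕ} {P : Finset (ℕ × ℕ)}
    (hP : ∀ p, p ∈ P ↔ p ∈ S ∧ (p.1, p.2 + 1) ∉ S ∧ (p.1 + 1, p.2) ∉ S) :
    (tab S (N + 1)).encard = ∑ p ∈ P, (tab (S \ {p}) N).encard := by
  rw [tab_succ hP, Set.encard_iUnion_of_finite, finsum_eq_sum_of_fintype,
    Finset.sum_coe_sort P (fun p =>
      ((fun T => Function.update T p (N + 1)) '' tab (S \ {p}) N).encard)]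
  · refine Finset.sum_congr rfl fun p _ => Set.InjOn.encard_image ?_
    intro T hT T' hT' h
    funext c
    by_cases hc : c = p
    · rw [hc, hT.1 p fun h => h.2 rfl, hT'.1 p fun h => h.2 rfl]
    · have := congrFun h c
      simpa [Function.update_of_ne hc] using this
  · rintro ⟨p, hp⟩ ⟨q, hq⟩ hpq
    have hne : p ≠ q := fun h => hpq (Subtype.ext h)
    rw [Function.onFun, Set.disjoint_left]
    rintro _ ⟨T, hT, rfl⟩ ⟨T', hT', h⟩
    have h1 := congrFun h p
    simp only [Function.update_self, Function.update_of_ne hne] at h1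
    have := tab_le hT' p
    omega

/-! ### Right moves and tableaux -/

theorem strictMono_add_single {m : ℕ} {x : Fin m → ℤ} (hx : StrictMono x) (i : Fin m) {ε : ℤ}
    (hε : |ε| ≤ 1) (h : Function.Injective (x + Pi.single i ε)) :
    StrictMono (x + Pi.single i ε) := by
  intro a b hab
  refine lt_of_le_of_ne ?_ (h.ne hab.ne)
  have h1 := hx hab
  rw [abs_le] at hε
  simp only [Pi.add_apply, Pi.single_apply]
  split_ifs with h1 h2
  · exact absurd (h1.trans h2.symm) hab.ne
  all_goals omega

/-- Right moves from `(1, …, m)` keep the walkers ordered and weakly right of their starting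
sites. -/
theorem upCount_ne_zero {m : ℕ} (n : ℕ) (x : Fin m → ℤ) (h : upCount n x ≠ 0) :
    StrictMono x ∧ (∀ i : Fin m, ((i : ℕ) : ℤ) + 1 ≤ x i) ∧
      ∑ i : Fin m, (x i - (((i : ℕ) : ℤ) + 1)) = n := by
  induction n generalizing x with
  | zero =>
    have hx : x = fun i : Fin m => ((i : ℕ) : ℤ) + 1 := by
      by_contra hne; exact h (if_neg hne)
    subst hx
    refine ⟨fun a b hab => ?_, fun i => le_rfl, by simp⟩
    have : (a : ℕ) < b := hab
    simp only
    omega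
  | succ n ih =>
    rw [upCount_succ] at h
    obtain ⟨i, hx, -, h2⟩ := support_moveOp _ _ h
    obtain ⟨a, b, c⟩ := ih _ h2
    have e : x + Pi.single i (-1) + Pi.single i 1 = x := by
      rw [add_assoc, ← Pi.single_add]; simp
    refine ⟨?_, fun k => ?_, ?_⟩
    · rw [← e]
      exact strictMono_add_single a i (by norm_num) (by rwa [e])
    · have := b k
      simp only [Pi.add_apply, Pi.single_apply] at this
      split_ifs at this <;> omega
    · simp only [Pi.add_apply, Finset.sum_sub_distrib, Finset.sum_add_distrib,
        Finset.sum_pi_single', Finset.mem_univ, if_true] at c ⊢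
      push_cast
      linarith

/-- The cells of the diagram of a configuration: row `r` belongs to the walker `m - 1 - r`, and
its length is that walker's displacement to the right of its starting site. -/
def configCells {m : ℕ} (x : Fin m → ℤ) : Set (ℕ × ℕ) :=
  {q | ∃ i : Fin m, q.1 + i + 1 = m ∧ (q.2 : ℤ) + i + 1 < x i}

theorem mem_configCells {m : ℕ} {x : Fin m → ℤ} {r c : ℕ} (i : Fin m) (h : r + i + 1 = m) :
    (r, c) ∈ configCells x ↔ (c : ℤ) + i + 1 < x i := by
  constructor
  · rintro ⟨j, hj, h2⟩
    have : j = i := Fin.ext (by simp only at hj; omega)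
    rwa [this] at h2
  · exact fun h2 => ⟨i, h, h2⟩

/-- The cell at the end of the row of walker `i`. -/
def endCell {m : ℕ} (x : Fin m → ℤ) (i : Fin m) : ℕ × ℕ :=
  (m - 1 - i, (x i - i - 2).toNat)

theorem configCells_sub {m : ℕ} (x : Fin m → ℤ) (i : Fin m) (hi : ((i : ℕ) : ℤ) + 1 < x i) :
    configCells x \ {endCell x i} = configCells (x + Pi.single i (-1)) := by
  ext ⟨r, c⟩
  by_cases hr : ∃ j : Fin m, r + j + 1 = m
  · obtain ⟨j, hj⟩ := hr
    rw [Set.mem_sdiff, mem_configCells j hj, mem_configCells j hj, Set.mem_singleton_iff, endCell,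
      Prod.mk.injEq]
    have h1 : r = m - 1 - i ↔ j = i := by rw [Fin.ext_iff]; omega
    rw [h1]
    by_cases hji : j = i
    · subst hji
      simp only [true_and, Pi.add_apply, Pi.single_eq_same]
      omega
    · simp [hji]
  · have : ∀ y : Fin m → ℤ, (r, c) ∉ configCells y := fun y ⟨j, h, _⟩ => hr ⟨j, h⟩
    simp [this]

/-- The removable cells of the diagram are the row ends of the walkers that can move left. -/
theorem mem_corners {m : ℕ} (x : Fin m → ℤ) (hx : StrictMono x) (p : ℕ × ℕ) :
    p ∈ (Finset.univ.filter fun i : Fin m => ((i : ℕ) : ℤ) + 1 < x i ∧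
      Function.Injective (x + Pi.single i (-1))).image (endCell x) ↔
    p ∈ configCells x ∧ (p.1, p.2 + 1) ∉ configCells x ∧ (p.1 + 1, p.2) ∉ configCells x := by
  obtain ⟨r, c⟩ := p
  simp only [Finset.mem_image, Finset.mem_filter, Finset.mem_univ, true_and]
  constructor
  · rintro ⟨i, ⟨hi, hinj⟩, he⟩
    rw [endCell, Prod.mk.injEq] at he
    have hr : r + i + 1 = m := by omega
    rw [mem_configCells i hr, mem_configCells i hr]
    refine ⟨by omega, by push_cast; omega, ?_⟩
    rintro ⟨k, hk, hk2⟩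
    simp only at hk hk2
    rw [injective_add_single_iff hx.injective i (by decide)] at hinj
    have hki : k < i := Fin.lt_def.2 (by omega)
    have a := hx hki
    have b := hinj k
    omega
  · rintro ⟨⟨i, hr, h1⟩, h2, h3⟩
    simp only at hr h1
    rw [mem_configCells i hr] at h2
    push_cast at h2
    refine ⟨i, ⟨by omega, ?_⟩, ?_⟩
    · rw [injective_add_single_iff hx.injective i (by decide)]
      intro k hk
      have hki : k < i := hx.lt_iff_lt.1 (by omega)
      have hki' : (k : ℕ) < i := hki
      -- Ordered integer sites leave no room for a walker strictly between `k` and `i`.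
      have hk1 : (k : ℕ) + 1 = i := by
        by_contra hne
        have hlt : (k : ℕ) + 1 < i := by omega
        have a := hx (show k < ⟨k + 1, by omega⟩ from Fin.lt_def.2 (by simp))
        have b := hx (show (⟨k + 1, by omega⟩ : Fin m) < i from Fin.lt_def.2 hlt)
        omega
      rw [mem_configCells k (by omega)] at h3
      omega
    · rw [endCell, Prod.mk.injEq]
      omega

theorem endCell_injective {m : ℕ} (x : Fin m → ℤ) : Function.Injective (endCell x) := by
  intro i j h
  rw [endCell, endCell, Prod.mk.injEq] at h
  exact Fin.ext (by omega)

/-- Sequences of right moves from `(1, …, m)` to `x` are standard tableaux on the diagram of `x`,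
because both counts obey the branching rule. -/
theorem encard_tab_configCells {m : ℕ} (n : ℕ) (x : Fin m → ℤ) (hx : StrictMono x)
    (hx1 : ∀ i : Fin m, ((i : ℕ) : ℤ) + 1 ≤ x i) (hs : ∑ i : Fin m, (x i - (((i : ℕ) : ℤ) + 1)) = n) :
    (tab (configCells x) n).encard = (upCount n x : ℕ) := by
  induction n generalizing x with
  | zero =>
    have hx0 : x = fun i : Fin m => ((i : ℕ) : ℤ) + 1 := by
      funext i
      have := (Finset.sum_eq_zero_iff_of_nonneg
        (fun i _ => sub_nonneg.2 (hx1 i))).1 (hs.trans Nat.cast_zero) i (Finset.mem_univ i)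
      linarith
    have hS : configCells x = ∅ := by
      rw [Set.eq_empty_iff_forall_notMem]
      rintro q ⟨i, _, h⟩
      rw [hx0] at h
      simp only at h
      omega
    have h1 : upCount 0 x = 1 := if_pos hx0
    rw [h1, Nat.cast_one, Set.encard_eq_one, hS]
    refine ⟨fun _ => 0, Set.eq_singleton_iff_unique_mem.2 ⟨⟨fun _ _ => rfl, by simp, by simp,
      by simp⟩, fun T hT => funext fun c => hT.1 c (Set.notMem_empty c)⟩⟩
  | succ n ih =>
    rw [encard_tab_succ (mem_corners x hx), Finset.sum_image (endCell_injective x).injOn,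
      upCount_succ, moveOp_apply, Nat.cast_sum, Finset.sum_filter]
    refine Finset.sum_congr rfl fun i _ => ?_
    by_cases hinj : Function.Injective (x + Pi.single i (-1))
    swap
    · simp [hinj]
    have hx' := strictMono_add_single hx i (by norm_num) hinj
    by_cases hi : ((i : ℕ) : ℤ) + 1 < x i
    · rw [if_pos ⟨hi, hinj⟩, if_pos ⟨hx.injective, hinj⟩, configCells_sub x i hi]
      refine ih _ hx' (fun k => ?_) ?_
      · simp only [Pi.add_apply, Pi.single_apply]
        have := hx1 k
        split_ifs with hk
        · subst hk; omega
        · omega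
      · simp only [Pi.add_apply, Finset.sum_sub_distrib, Finset.sum_add_distrib,
          Finset.sum_pi_single', Finset.mem_univ, if_true] at hs ⊢
        push_cast at hs
        linarith
    · rw [if_neg fun h => hi h.1]
      split_ifs with hc
      · have : upCount n (x + Pi.single i (-1)) = 0 := by
          by_contra hne
          have := (upCount_ne_zero n _ hne).2.1 i
          simp only [Pi.add_apply, Pi.single_eq_same] at this
          omega
        rw [this, Nat.cast_zero]
      · rfl

/-! ### Partitions and configurations -/

/-- The parts of `μ` in weakly decreasing order. -/
noncomputable def partList (μ : Multiset ℕ) : List ℕ := (μ.sort (· ≤ ·)).reverse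

theorem nthPart_eq (μ : Multiset ℕ) (i : ℕ) : nthPart μ i = (partList μ).getD i 0 := rfl

theorem coe_partList (μ : Multiset ℕ) : (partList μ : Multiset ℕ) = μ := by
  rw [partList, Multiset.coe_reverse, Multiset.sort_eq]

theorem length_partList (μ : Multiset ℕ) : (partList μ).length = μ.card := by
  simp [partList]

theorem pairwise_partList (μ : Multiset ℕ) : (partList μ).Pairwise (· ≥ ·) := by
  rw [partList, List.pairwise_reverse]
  exact Multiset.pairwise_sort _ _

theorem nthPart_antitone (μ : Multiset ℕ) : Antitone (nthPart μ) := by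
  intro r s hrs
  rw [nthPart_eq, nthPart_eq]
  by_cases hs : s < (partList μ).length
  · rcases hrs.eq_or_lt with rfl | h
    · exact le_rfl
    · rw [List.getD_eq_getElem _ _ hs, List.getD_eq_getElem _ _ (h.trans hs)]
      exact List.pairwise_iff_getElem.1 (pairwise_partList μ) _ _ _ _ h
  · rw [List.getD_eq_default _ _ (not_lt.1 hs)]
    exact Nat.zero_le _

theorem nthPart_pos (μ : Multiset ℕ) {r : ℕ} (h : 0 < nthPart μ r) : r < μ.card := by
  by_contra hr
  rw [nthPart_eq, List.getD_eq_default _ _ (by rw [length_partList]; omega)] at h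
  exact lt_irrefl _ h

theorem nthPart_le_sum (μ : Multiset ℕ) (r : ℕ) : nthPart μ r ≤ μ.sum := by
  by_cases hr : r < (partList μ).length
  · rw [nthPart_eq, List.getD_eq_getElem _ _ hr]
    refine Multiset.le_sum_of_mem ?_
    have h := Multiset.mem_coe.2 (List.getElem_mem hr)
    rwa [coe_partList μ] at h
  · rw [nthPart_eq, List.getD_eq_default _ _ (not_lt.1 hr)]
    exact Nat.zero_le _

theorem map_range_nthPart (μ : Multiset ℕ) {m : ℕ} (h : μ.card ≤ m) :
    (List.range m).map (nthPart μ) = partList μ ++ List.replicate (m - μ.card) 0 := by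
  have hl := length_partList μ
  refine List.ext_getElem (by simp [hl]; omega) fun i h1 h2 => ?_
  rw [List.getElem_map, List.getElem_range, nthPart_eq, List.getElem_append]
  split_ifs with hi
  · rw [List.getD_eq_getElem _ _ hi]
  · rw [List.getD_eq_default _ _ (not_lt.1 hi), List.getElem_replicate]

theorem filter_map_range_nthPart (μ : Multiset ℕ) {m : ℕ} (h : μ.card ≤ m) (h0 : 0 ∉ μ) :
    (((List.range m).map (nthPart μ)).filter (· ≠ 0) : Multiset ℕ) = μ := by
  rw [map_range_nthPart μ h, List.filter_append, List.filter_eq_self.2, List.filter_eq_nil_iff.2,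
    List.append_nil, coe_partList]
  · intro a ha
    simp [List.eq_of_mem_replicate ha]
  · intro a ha
    have : a ∈ μ := by rw [← coe_partList μ]; exact ha
    have hne : a ≠ 0 := fun h => h0 (h ▸ this)
    simpa using hne

theorem sum_range_nthPart (μ : Multiset ℕ) {m : ℕ} (h : μ.card ≤ m) :
    ∑ r ∈ Finset.range m, nthPart μ r = μ.sum := by
  have : ((List.range m).map (nthPart μ)).sum = μ.sum := by
    rw [map_range_nthPart μ h, List.sum_append]
    conv_rhs => rw [← coe_partList μ]
    simp
  rw [← this]
  rfl

/-- The configuration of a partition with at most `m` parts: the `r`-th largest part is the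
displacement of the `r`-th walker from the right. -/
noncomputable def partConfig (m : ℕ) (μ : Multiset ℕ) : Fin m → ℤ :=
  fun i => (i : ℕ) + 1 + (nthPart μ (m - 1 - i) : ℕ)

theorem partConfig_strictMono (m : ℕ) (μ : Multiset ℕ) : StrictMono (partConfig m μ) := by
  intro i j hij
  have h1 : (i : ℕ) < j := hij
  have := nthPart_antitone μ (show m - 1 - (j : ℕ) ≤ m - 1 - i by omega)
  simp only [partConfig]
  omega

theorem partConfig_sum (m : ℕ) (μ : Multiset ℕ) (h : μ.card ≤ m) :
    ∑ i : Fin m, (partConfig m μ i - (((i : ℕ) : ℤ) + 1)) = μ.sum := by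
  have : ∀ i : Fin m, partConfig m μ i - (((i : ℕ) : ℤ) + 1) = (nthPart μ (m - 1 - i) : ℕ) := by
    intro i
    simp only [partConfig]
    ring
  rw [Finset.sum_congr rfl fun i _ => this i,
    Fin.sum_univ_eq_sum_range (fun i => ((nthPart μ (m - 1 - i) : ℕ) : ℤ)) m,
    Finset.sum_range_reflect (fun i => ((nthPart μ i : ℕ) : ℤ)) m, ← sum_range_nthPart μ h,
    Nat.cast_sum]

theorem configCells_partConfig (m : ℕ) (μ : Multiset ℕ) (h : μ.card ≤ m) :
    configCells (partConfig m μ) = (shapeCells μ : Set (ℕ × ℕ)) := by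
  ext ⟨r, c⟩
  simp only [shapeCells, Finset.coe_filter, Finset.mem_product, Finset.mem_range,
    Set.mem_ofPred_eq]
  have h2 := nthPart_le_sum μ r
  constructor
  · rintro ⟨i, hi, hc⟩
    simp only [partConfig] at hi hc
    rw [show m - 1 - (i : ℕ) = r by omega] at hc
    have := nthPart_pos μ (r := r) (by omega)
    omega
  · rintro ⟨⟨h3, h4⟩, h5⟩
    refine ⟨⟨m - 1 - r, by omega⟩, by simp only; omega, ?_⟩
    simp only [partConfig]
    rw [show m - 1 - (m - 1 - r) = r by omega]
    omega

theorem upCount_partConfig (m n : ℕ) (lam : Nat.Partition n) (h : lam.parts.card ≤ m) :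
    upCount n (partConfig m lam.parts) = sytCount lam.parts := by
  have h1 := encard_tab_configCells n (partConfig m lam.parts) (partConfig_strictMono m _)
    (fun i => by simp [partConfig]) (by rw [partConfig_sum m _ h, lam.parts_sum])
  rw [configCells_partConfig m _ h] at h1
  have h2 : sytCount lam.parts = (tab (shapeCells lam.parts) n).ncard := by
    have h3 : sytCount lam.parts = (tab (shapeCells lam.parts) lam.parts.sum).ncard := rfl
    rwa [lam.parts_sum] at h3
  rw [h2, Set.ncard, h1, ENat.toNat_natCast]

theorem partConfig_injective (m : ℕ) {μ ν : Multiset ℕ} (hμ : μ.card ≤ m) (hν : ν.card ≤ m)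
    (hμ0 : 0 ∉ μ) (hν0 : 0 ∉ ν) (h : partConfig m μ = partConfig m ν) : μ = ν := by
  rw [← filter_map_range_nthPart μ hμ hμ0, ← filter_map_range_nthPart ν hν hν0]
  congr 2
  refine List.map_congr_left fun r hr => ?_
  have hr := List.mem_range.1 hr
  have := congrFun h ⟨m - 1 - r, by omega⟩
  simp only [partConfig] at this
  rw [show m - 1 - (m - 1 - r) = r by omega] at this
  omega

theorem getD_filter_of_pairwise (l : List ℕ) (hl : l.Pairwise (· ≥ ·)) (r : ℕ) :
    (l.filter (· ≠ 0)).getD r 0 = l.getD r 0 := by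
  induction l generalizing r with
  | nil => rfl
  | cons a l ih =>
    rw [List.pairwise_cons] at hl
    by_cases ha : a = 0
    · have h0 : ∀ b ∈ a :: l, b = 0 := by
        intro b hb
        rcases List.mem_cons.1 hb with rfl | hb
        · exact ha
        · have := hl.1 b hb
          omega
      rw [List.filter_eq_nil_iff.2 (by intro b hb; simp [h0 b hb])]
      by_cases hr : r < (a :: l).length
      · rw [List.getD_eq_getElem _ _ hr, h0 _ (List.getElem_mem hr)]
        rfl
      · rw [List.getD_eq_default _ _ (not_lt.1 hr)]
        rfl
    · rw [List.filter_cons_of_pos (by simpa using ha)]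
      cases r with
      | zero => rfl
      | succ r => simpa using ih hl.2 r

theorem partList_coe (l : List ℕ) (hl : l.Pairwise (· ≥ ·)) : partList (l : Multiset ℕ) = l :=
  List.Perm.eq_of_pairwise' (r := (· ≥ ·)) (pairwise_partList _) hl
    (Multiset.coe_eq_coe.1 (coe_partList _))

/-- Every ordered configuration weakly right of `(1, …, m)` comes from a partition. -/
theorem exists_partConfig (m n : ℕ) (x : Fin m → ℤ) (hx : StrictMono x)
    (hx1 : ∀ i : Fin m, ((i : ℕ) : ℤ) + 1 ≤ x i)
    (hs : ∑ i : Fin m, (x i - (((i : ℕ) : ℤ) + 1)) = n) :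
    ∃ lam : Nat.Partition n, lam.parts.card ≤ m ∧ partConfig m lam.parts = x := by
  set a : Fin m → ℕ := fun i => (x i - (((i : ℕ) : ℤ) + 1)).toNat with ha
  have hmono : Monotone a := by
    intro i j hij
    -- `x k - k` is monotone in `k` because `x` is a strictly increasing integer sequence.
    have key : ∀ d : ℕ, ∀ i j : Fin m, (i : ℕ) + d = j → x i + d ≤ x j := by
      intro d
      induction d with
      | zero =>
        intro i j h
        rw [show i = j from Fin.ext h]; simp
      | succ d ih =>
        intro i j h
        have h1 := ih i ⟨i + d, by omega⟩ rfl
        have h2 := hx (show (⟨i + d, by omega⟩ : Fin m) < j from Fin.lt_def.2 (by simp; omega))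
        push_cast
        omega
    have hij' : (i : ℕ) ≤ j := hij
    have := key (j - i) i j (by omega)
    simp only [ha]
    omega
  set L : List ℕ := List.ofFn (fun r => a r.rev) with hL
  have hLp : L.Pairwise (· ≥ ·) := by
    rw [hL, List.pairwise_ofFn]
    exact fun i j hij => hmono (Fin.rev_le_rev.2 hij.le)
  have hsum : ((L.filter (· ≠ 0) : List ℕ) : Multiset ℕ).sum = n := by
    rw [Multiset.sum_coe]
    have h1 : (L.filter (· ≠ 0)).sum = L.sum := by
      clear_value L
      clear hL hLp
      induction L with
      | nil => rfl
      | cons b L ih => by_cases hb : b = 0 <;> simp_all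
    rw [h1, hL, List.sum_ofFn, show ∑ i : Fin m, a i.rev = ∑ i, a i from
      Equiv.sum_comp Fin.revPerm a]
    have : ((∑ i, a i : ℕ) : ℤ) = n := by
      rw [← hs, Nat.cast_sum]
      refine Finset.sum_congr rfl fun i _ => ?_
      have := hx1 i
      simp only [ha]
      omega
    exact_mod_cast this
  refine ⟨⟨(L.filter (· ≠ 0) : List ℕ), fun {i} hi => ?_, hsum⟩, ?_, ?_⟩
  · have := (List.mem_filter.1 (Multiset.mem_coe.1 hi)).2
    exact Nat.pos_of_ne_zero (by simpa using this)
  · simp only [Multiset.coe_card]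
    exact (List.length_filter_le _ _).trans (by simp [hL])
  · funext i
    simp only [partConfig]
    rw [nthPart_eq, partList_coe _ (hLp.filter _), getD_filter_of_pairwise _ hLp,
      List.getD_eq_getElem _ _ (by simp [hL]; omega)]
    simp only [hL, List.getElem_ofFn]
    have hrev : Fin.rev (⟨m - 1 - i, by omega⟩ : Fin m) = i := by
      ext
      rw [Fin.val_rev]
      simp only
      omega
    rw [hrev]
    have := hx1 i
    simp only [ha]
    omega

/-- Pairs of increasing paths with a common endpoint are pairs of standard tableaux of a common
shape. -/
theorem finsum_upCount_sq (m n : ℕ) :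
    ∑ᶠ x : Fin m → ℤ, upCount n x ^ 2 =
      ∑ lam ∈ Finset.univ.filter (fun lam : Nat.Partition n => lam.parts.card ≤ m),
        (sytCount lam.parts) ^ 2 := by
  have h0 : ∀ lam : Nat.Partition n, 0 ∉ lam.parts := fun lam h =>
    lt_irrefl _ (lam.parts_pos h)
  rw [finsum_eq_sum_of_support_subset (s := (Finset.univ.filter
    (fun lam : Nat.Partition n => lam.parts.card ≤ m)).image fun lam => partConfig m lam.parts),
    Finset.sum_image]
  · refine Finset.sum_congr rfl fun lam hlam => ?_
    rw [upCount_partConfig m n lam (Finset.mem_filter.1 hlam).2]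
  · intro lam hlam mu hmu h
    have hlam := (Finset.mem_filter.1 hlam).2
    have hmu := (Finset.mem_filter.1 hmu).2
    exact Nat.Partition.ext (partConfig_injective m hlam hmu (h0 _) (h0 _) h)
  · intro x hx
    have hne : upCount n x ≠ 0 := fun h => hx (by simp [h])
    obtain ⟨a, b, c⟩ := upCount_ne_zero n x hne
    obtain ⟨lam, h1, h2⟩ := exists_partConfig m n x a b c
    rw [Finset.mem_coe, Finset.mem_image]
    exact ⟨lam, Finset.mem_filter.2 ⟨Finset.mem_univ _, h1⟩, h2⟩

/-- The number of non-intersecting loop walks of `m` walkers on `ℤ` of length `2n`,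
starting and ending at `(1,2,…,m)`, where at each instant exactly one walker moves one
step left or right and the walkers stay pairwise distinct, equals
`C(2n,n) · Σ_{λ ⊢ n, λ has at most m parts} (f^λ)²`. -/
theorem stmt4 (m n : ℕ) (hm : 1 ≤ m) :
    Set.ncard {w : Fin (2 * n + 1) → Fin m → ℤ |
        (∀ i, w 0 i = ((i : ℕ) : ℤ) + 1) ∧
        (∀ i, w (Fin.last (2 * n)) i = ((i : ℕ) : ℤ) + 1) ∧
        (∀ t : Fin (2 * n), ∃ j : Fin m,
            (w t.succ j = w t.castSucc j + 1 ∨ w t.succ j = w t.castSucc j - 1) ∧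
            ∀ j', j' ≠ j → w t.succ j' = w t.castSucc j') ∧
        (∀ t, Function.Injective (w t))}
      = (2 * n).choose n *
        ∑ lam ∈ Finset.univ.filter (fun lam : Nat.Partition n => lam.parts.card ≤ m),
          (sytCount lam.parts) ^ 2 := by
  rw [← finsum_upCount_sq, ← closed_pow_apply, ← ENat.toNat_natCast
    (((moveOp 1 + moveOp (-1) : Module.End ℕ ((Fin m → ℤ) → ℕ)) ^ (2 * n)) startInd _),
    ← encard_walkSet]
  rfl
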